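/- (Bound of Color Frequencies.) For each n ∈ ℕ let d(n) ≥ 1 and let μ_n^(k) ∈ [0,1] for k = 1,…,d(n). Consider n nodes whose colors are independent random elements of {0,…,2^{d(n)}−1}, where the d(n) binary digits of each node's color are independent Bernoulli random variables, the k-th digit equal to 1 with probability μ_n^(k). Let V_c denote the (random) number of nodes of color c, let E_c := E[V_c] = n·∏_{k=1}^{d(n)} (μ_n^(k))^{c_k}(1−μ_n^(k))^{1−c_k}, let F := {c : E_c ≥ 1} and I := {c : E_c < 1}, and define the random variables m_F := max_{c∈F} V_c/E_c and m_I := max_{c∈I} V_c. Then P[ m_F ≤ log₂ n and m_I ≤ log₂ n ] → 1 as n → ∞. -/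

import Mathlib

open scoped Classical

/-- The color of node `i`: the natural number in `{0,…,2^d−1}` whose `k`-th most
significant binary digit is the `k`-th attribute bit `ω i k` of node `i`. -/
def colorOf {n d : ℕ} (ω : Fin n → Fin d → Bool) (i : Fin n) : ℕ :=
  ∑ k : Fin d, if ω i k then 2 ^ (d - 1 - (k : ℕ)) else 0

/-- `V_c`, the number of nodes having color `c` under the attribute
configuration `ω`. -/
def Vcount {n d : ℕ} (ω : Fin n → Fin d → Bool) (c : ℕ) : ℕ :=
  (Finset.univ.filter fun i => colorOf ω i = c).card

/-- The probability of the attribute configuration `ω` under the product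
measure in which all `n·d` attribute bits are independent and the `k`-th bit of
every node equals `1` with probability `μ k`. -/
noncomputable def bitWeight {n d : ℕ} (μ : ℕ → ℝ) (ω : Fin n → Fin d → Bool) : ℝ :=
  ∏ i : Fin n, ∏ k : Fin d, if ω i k then μ (k : ℕ) else 1 - μ (k : ℕ)

/-- `E_c = E[V_c] = n · ∏_{k=1}^d (μ⁽ᵏ⁾)^{c_k}(1−μ⁽ᵏ⁾)^{1−c_k}`, the expected
number of nodes of color `c`, where `c_k = ⌊c / 2^(d−1−k)⌋ mod 2`. -/
noncomputable def Ecol (n d : ℕ) (μ : ℕ → ℝ) (c : ℕ) : ℝ :=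
  (n : ℝ) * ∏ k ∈ Finset.range d,
    μ k ^ (c / 2 ^ (d - 1 - k) % 2) * (1 - μ k) ^ (1 - c / 2 ^ (d - 1 - k) % 2)

/-- weight of a single bit vector -/
noncomputable def wt {d : ℕ} (μ : ℕ → ℝ) (b : Fin d → Bool) : ℝ :=
  ∏ k : Fin d, if b k then μ (k : ℕ) else 1 - μ (k : ℕ)

/-- color code of a single bit vector -/
def code {d : ℕ} (b : Fin d → Bool) : ℕ :=
  ∑ k : Fin d, if b k then 2 ^ (d - 1 - (k : ℕ)) else 0

/-- digits of a color -/
def dig (d c : ℕ) : Fin d → Bool := fun k => decide (c / 2 ^ (d - 1 - (k : ℕ)) % 2 = 1)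

lemma sum_bits (c d : ℕ) : ∑ k ∈ Finset.range d, (if c / 2 ^ k % 2 = 1 then 2 ^ k else 0) = c % 2 ^ d := by
  induction d with
  | zero => simp [Nat.mod_one]
  | succ d ih =>
    rw [Finset.sum_range_succ, ih, Nat.mod_pow_succ]
    rcases Nat.mod_two_eq_zero_or_one (c / 2 ^ d) with h | h <;> simp [h]

lemma code_dig {d c : ℕ} (hc : c < 2 ^ d) : code (dig d c) = c := by
  have h := sum_bits c d
  rw [Nat.mod_eq_of_lt hc, ← Finset.sum_range_reflect] at h
  rw [← Fin.sum_univ_eq_sum_range (fun k => if c / 2 ^ (d - 1 - k) % 2 = 1 then 2 ^ (d - 1 - k) else 0)] at h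
  simpa [code, dig] using h

lemma dig_surj (d : ℕ) (b : Fin d → Bool) : ∃ c < 2 ^ d, dig d c = b := by
  have hinj : Function.Injective (fun c : Fin (2 ^ d) => dig d c) := by
    intro x y h
    have := congrArg code h
    simp only [code_dig x.2, code_dig y.2] at this
    exact Fin.ext this
  have hb := (Fintype.bijective_iff_injective_and_card _).2 ⟨hinj, by simp⟩
  obtain ⟨c, hc⟩ := hb.2 b
  exact ⟨c, c.2, hc⟩

lemma code_eq_iff {d c : ℕ} (hc : c < 2 ^ d) (b : Fin d → Bool) : code b = c ↔ b = dig d c := by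
  constructor
  · intro h
    obtain ⟨c', hc', rfl⟩ := dig_surj d b
    rw [code_dig hc'] at h
    rw [h]
  · rintro rfl
    exact code_dig hc

/-- probability that a node has color c -/
noncomputable def qcol (d : ℕ) (μ : ℕ → ℝ) (c : ℕ) : ℝ :=
  ∑ b : Fin d → Bool, if code b = c then wt μ b else 0

lemma Ecol_eq (n : ℕ) {d c : ℕ} (μ : ℕ → ℝ) (hc : c < 2 ^ d) :
    Ecol n d μ c = n * qcol d μ c := by
  unfold Ecol qcol
  simp only [code_eq_iff hc]
  simp only [Finset.sum_ite_eq', Finset.mem_univ, if_true]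
  congr 1
  rw [wt, ← Fin.prod_univ_eq_prod_range (fun k => μ k ^ (c / 2 ^ (d - 1 - k) % 2) * (1 - μ k) ^ (1 - c / 2 ^ (d - 1 - k) % 2))]
  refine Finset.prod_congr rfl fun k _ => ?_
  rcases Nat.mod_two_eq_zero_or_one (c / 2 ^ (d - 1 - (k:ℕ))) with h | h <;> simp [dig, h]

lemma wt_nonneg {d : ℕ} {μ : ℕ → ℝ} (hμ : ∀ k, μ k ∈ Set.Icc (0 : ℝ) 1) (b : Fin d → Bool) :
    0 ≤ wt μ b := by
  refine Finset.prod_nonneg fun k _ => ?_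
  have := hμ k
  split_ifs
  · exact this.1
  · linarith [this.2]

lemma sum_wt (d : ℕ) (μ : ℕ → ℝ) : ∑ b : Fin d → Bool, wt μ b = 1 := by
  unfold wt
  rw [← Fintype.prod_sum (fun (k : Fin d) (x : Bool) => if x then μ (k : ℕ) else 1 - μ (k : ℕ))]
  simp

lemma bitWeight_eq {n d : ℕ} (μ : ℕ → ℝ) (ω : Fin n → Fin d → Bool) :
    bitWeight μ ω = ∏ i, wt μ (ω i) := rfl

lemma sum_bitWeight (n d : ℕ) (μ : ℕ → ℝ) : ∑ ω : Fin n → Fin d → Bool, bitWeight μ ω = 1 := by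
  simp only [bitWeight_eq]
  rw [← Fintype.prod_sum (fun (_ : Fin n) (b : Fin d → Bool) => wt μ b)]
  simp [sum_wt]

lemma bitWeight_nonneg {n d : ℕ} {μ : ℕ → ℝ} (hμ : ∀ k, μ k ∈ Set.Icc (0 : ℝ) 1)
    (ω : Fin n → Fin d → Bool) : 0 ≤ bitWeight μ ω :=
  Finset.prod_nonneg fun i _ => wt_nonneg hμ (ω i)

lemma sum_mgf (n d : ℕ) (μ : ℕ → ℝ) (c : ℕ) :
    ∑ ω : Fin n → Fin d → Bool, bitWeight μ ω * 4 ^ Vcount ω c = (1 + 3 * qcol d μ c) ^ n := by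
  have h1 : ∀ ω : Fin n → Fin d → Bool, bitWeight μ ω * 4 ^ Vcount ω c =
      ∏ i, (wt μ (ω i) * if code (ω i) = c then 4 else 1) := by
    intro ω
    rw [Finset.prod_mul_distrib, ← bitWeight_eq, Finset.prod_ite]
    simp only [Vcount, colorOf, code, Finset.prod_const, one_pow, mul_one]
    congr!
  simp only [h1]
  rw [← Fintype.prod_sum (fun (_ : Fin n) (b : Fin d → Bool) => wt μ b * if code b = c then (4:ℝ) else 1)]
  have h2 : ∑ b : Fin d → Bool, (wt μ b * if code b = c then (4:ℝ) else 1) = 1 + 3 * qcol d μ c := by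
    have h3 : ∑ b : Fin d → Bool, (wt μ b * if code b = c then (4:ℝ) else 1) =
        ∑ b : Fin d → Bool, wt μ b + 3 * qcol d μ c := by
      rw [qcol, Finset.mul_sum, ← Finset.sum_add_distrib]
      refine Finset.sum_congr rfl fun b _ => ?_
      split_ifs <;> ring
    rw [h3, sum_wt]
  rw [h2]
  simp

lemma qcol_nonneg {d : ℕ} {μ : ℕ → ℝ} (hμ : ∀ k, μ k ∈ Set.Icc (0 : ℝ) 1) (c : ℕ) :
    0 ≤ qcol d μ c := by
  refine Finset.sum_nonneg fun b _ => ?_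
  split_ifs
  · exact wt_nonneg hμ b
  · exact le_rfl

lemma sum_qcol_le (d : ℕ) {μ : ℕ → ℝ} (hμ : ∀ k, μ k ∈ Set.Icc (0 : ℝ) 1) :
    ∑ c ∈ Finset.range (2 ^ d), qcol d μ c ≤ 1 := by
  unfold qcol
  rw [Finset.sum_comm, ← sum_wt d μ]
  refine Finset.sum_le_sum fun b _ => ?_
  rw [Finset.sum_ite_eq]
  split_ifs
  · exact le_rfl
  · exact wt_nonneg hμ b

/-- the bad event for color c, with `E` the expected count -/
lemma tail_bound {n d : ℕ} (hn : 5 ≤ n) {μ : ℕ → ℝ} (hμ : ∀ k, μ k ∈ Set.Icc (0 : ℝ) 1) (c : ℕ)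
    (E : ℝ) (hE : E = n * qcol d μ c) :
    ∑ ω : Fin n → Fin d → Bool, bitWeight μ ω *
      (if max 1 E * Real.logb 2 n < Vcount ω c then (1:ℝ) else 0) ≤
      E * (6 * Real.exp 3 / n ^ 2) := by
  have hn' : (5:ℝ) ≤ n := by exact_mod_cast hn
  have hq := qcol_nonneg (d := d) hμ c
  have hE0 : 0 ≤ E := by rw [hE]; positivity
  set M := max 1 E with hM
  have hM1 : 1 ≤ M := le_max_left _ _
  have hME : E ≤ M := le_max_right _ _
  set T : ℝ := ((n:ℝ) ^ 2) ^ M with hT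
  have hT2 : 2 ≤ T := by
    have : ((n:ℝ)^2) ^ (1:ℝ) ≤ ((n:ℝ)^2) ^ M :=
      Real.rpow_le_rpow_of_exponent_le (by nlinarith) hM1
    rw [Real.rpow_one] at this
    nlinarith
  have hT0 : 0 < T := by linarith
  have hbad : ∀ ω : Fin n → Fin d → Bool,
      (if M * Real.logb 2 n < Vcount ω c then (1:ℝ) else 0) ≤ 2 / T * (4 ^ Vcount ω c - 1) := by
    intro ω
    have h41 : (1:ℝ) ≤ 4 ^ Vcount ω c := one_le_pow₀ (by norm_num)
    split_ifs with h
    · have hTV : T ≤ 4 ^ Vcount ω c := by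
        have h1 : (n:ℝ) ^ 2 = (4:ℝ) ^ (Real.logb 2 n) := by
          rw [show (4:ℝ) = 2 ^ (2:ℝ) by norm_num, ← Real.rpow_mul (by norm_num), mul_comm,
            Real.rpow_mul (by norm_num), Real.rpow_logb (by norm_num) (by norm_num) (by linarith)]
          norm_num
        rw [hT, h1, ← Real.rpow_mul (by norm_num), ← Real.rpow_natCast]
        exact Real.rpow_le_rpow_of_exponent_le (by norm_num) (by linarith)
      rw [div_mul_eq_mul_div, le_div_iff₀ hT0]
      linarith
    · exact mul_nonneg (by positivity) (by linarith)
  have hexp : (1 + 3 * qcol d μ c) ^ n ≤ Real.exp (3 * E) := by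
    rw [hE, show 3 * (n * qcol d μ c) = n * (3 * qcol d μ c) by ring, Real.exp_nat_mul]
    gcongr
    linarith [Real.add_one_le_exp (3 * qcol d μ c)]
  have hexp2 : Real.exp (3 * E) - 1 ≤ 3 * E * Real.exp (3 * M) := by
    have h1 := Real.add_one_le_exp (-(3 * E))
    have h2 : Real.exp (-(3*E)) * Real.exp (3*E) = 1 := by rw [← Real.exp_add]; simp
    have h3 : Real.exp (3 * E) ≤ Real.exp (3 * M) := Real.exp_le_exp.2 (by linarith)
    have h4 := Real.exp_pos (3 * E)
    nlinarith
  have hfin : Real.exp (3 * M) / T ≤ Real.exp 3 / n ^ 2 := by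
    rw [hT, Real.exp_mul, ← Real.div_rpow (Real.exp_pos _).le (by positivity)]
    have he : Real.exp 3 ≤ (n:ℝ) ^ 2 := by
      have h3 : Real.exp 3 = Real.exp 1 ^ 3 := by rw [← Real.exp_nat_mul]; norm_num
      have h5 : Real.exp 1 ^ 3 ≤ 2.7182818286 ^ 3 :=
        pow_le_pow_left₀ (Real.exp_pos _).le Real.exp_one_lt_d9.le 3
      norm_num at h5
      nlinarith
    calc _ ≤ (Real.exp 3 / (n:ℝ) ^ 2) ^ (1:ℝ) :=
          Real.rpow_le_rpow_of_exponent_ge (by positivity) (by rw [div_le_one (by positivity)]; exact he) hM1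
      _ = _ := Real.rpow_one _
  calc _ ≤ ∑ ω : Fin n → Fin d → Bool, bitWeight μ ω * (2 / T * (4 ^ Vcount ω c - 1)) :=
        Finset.sum_le_sum fun ω _ => mul_le_mul_of_nonneg_left (hbad ω) (bitWeight_nonneg hμ ω)
    _ = 2 / T * ((1 + 3 * qcol d μ c) ^ n - 1) := by
        have h1 : (1 + 3 * qcol d μ c) ^ n - 1 =
            ∑ ω : Fin n → Fin d → Bool, (bitWeight μ ω * 4 ^ Vcount ω c - bitWeight μ ω) := by
          rw [Finset.sum_sub_distrib, sum_mgf, sum_bitWeight]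
        rw [h1, Finset.mul_sum]
        exact Finset.sum_congr rfl fun ω _ => by ring
    _ ≤ 2 / T * (3 * E * Real.exp (3 * M)) := by gcongr; linarith
    _ = 6 * E * (Real.exp (3 * M) / T) := by ring
    _ ≤ 6 * E * (Real.exp 3 / n ^ 2) := by gcongr
    _ = _ := by ring

/-- **Bound of color frequencies (Theorem 2 of the paper).**
For each `n`, let the `d n` attribute bits of each of `n` nodes be independent
Bernoulli(`μ n k`) random variables, let `V_c` be the number of nodes of color
`c`, let `F = {c : E_c ≥ 1}` and `I = {c : E_c < 1}`, and let
`m_F = max_{c∈F} V_c / E_c` and `m_I = max_{c∈I} V_c`.  Then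
`P[m_F ≤ log₂ n ∧ m_I ≤ log₂ n] → 1` as `n → ∞`. -/
theorem color_frequency_bound (d : ℕ → ℕ) (hd : ∀ n, 1 ≤ d n)
    (μ : ℕ → ℕ → ℝ) (hμ : ∀ n k, μ n k ∈ Set.Icc (0 : ℝ) 1) :
    Filter.Tendsto
      (fun n : ℕ =>
        ∑ ω : Fin n → Fin (d n) → Bool,
          bitWeight (μ n) ω *
            if (∀ c ∈ (Finset.range (2 ^ d n)).filter
                    (fun c => 1 ≤ Ecol n (d n) (μ n) c),
                  (Vcount ω c : ℝ) / Ecol n (d n) (μ n) c ≤ Real.logb 2 n) ∧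
               (∀ c ∈ (Finset.range (2 ^ d n)).filter
                    (fun c => Ecol n (d n) (μ n) c < 1),
                  (Vcount ω c : ℝ) ≤ Real.logb 2 n)
            then (1 : ℝ) else 0)
      Filter.atTop (nhds 1) := by
  have hC : Filter.Tendsto (fun n : ℕ => 1 - 6 * Real.exp 3 / (n:ℝ)) Filter.atTop (nhds 1) := by
    simpa using (tendsto_const_div_atTop_nhds_zero_nat (6 * Real.exp 3)).const_sub 1
  refine tendsto_of_tendsto_of_tendsto_of_le_of_le' hC tendsto_const_nhds ?_ ?_
  · filter_upwards [Filter.eventually_ge_atTop 5] with n hn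
    have hn' : (5:ℝ) ≤ n := by exact_mod_cast hn
    have hkey : ∀ ω : Fin n → Fin (d n) → Bool,
        1 - ∑ c ∈ Finset.range (2 ^ d n),
          (if max 1 (Ecol n (d n) (μ n) c) * Real.logb 2 n < Vcount ω c then (1:ℝ) else 0) ≤
        if (∀ c ∈ (Finset.range (2 ^ d n)).filter
                    (fun c => 1 ≤ Ecol n (d n) (μ n) c),
                  (Vcount ω c : ℝ) / Ecol n (d n) (μ n) c ≤ Real.logb 2 n) ∧
               (∀ c ∈ (Finset.range (2 ^ d n)).filter
                    (fun c => Ecol n (d n) (μ n) c < 1),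
                  (Vcount ω c : ℝ) ≤ Real.logb 2 n)
            then (1 : ℝ) else 0 := by
      intro ω
      have hnn : ∀ c ∈ Finset.range (2 ^ d n), (0:ℝ) ≤
          (if max 1 (Ecol n (d n) (μ n) c) * Real.logb 2 n < Vcount ω c then (1:ℝ) else 0) := by
        intro c _
        split_ifs <;> norm_num
      split_ifs with h
      · linarith [Finset.sum_nonneg hnn]
      · have : ∃ c ∈ Finset.range (2 ^ d n),
            max 1 (Ecol n (d n) (μ n) c) * Real.logb 2 n < Vcount ω c := by
          by_contra! hno
          refine h ⟨fun c hc => ?_, fun c hc => ?_⟩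
          · rw [Finset.mem_filter] at hc
            have := hno c hc.1
            rw [max_eq_right hc.2] at this
            rw [div_le_iff₀ (by linarith [hc.2])]
            linarith
          · rw [Finset.mem_filter] at hc
            have := hno c hc.1
            rw [max_eq_left hc.2.le] at this
            linarith
        obtain ⟨c, hc, hlt⟩ := this
        have := Finset.single_le_sum hnn hc
        rw [if_pos hlt] at this
        linarith
    calc 1 - 6 * Real.exp 3 / (n:ℝ)
        ≤ 1 - ∑ c ∈ Finset.range (2 ^ d n),
            Ecol n (d n) (μ n) c * (6 * Real.exp 3 / n ^ 2) := by
          rw [← Finset.sum_mul, Finset.sum_congr rfl fun c hc =>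
            Ecol_eq n (μ n) (Finset.mem_range.1 hc), ← Finset.mul_sum]
          have h1 := sum_qcol_le (d n) (hμ n)
          have h2 : (n:ℝ) * ∑ c ∈ Finset.range (2 ^ d n), qcol (d n) (μ n) c ≤ n * 1 := by gcongr
          have h3 := mul_le_mul_of_nonneg_right h2
            (show 0 ≤ 6 * Real.exp 3 / (n:ℝ) ^ 2 by positivity)
          have h4 : (n:ℝ) * 1 * (6 * Real.exp 3 / (n:ℝ) ^ 2) = 6 * Real.exp 3 / n := by
            field_simp
          linarith
      _ ≤ 1 - ∑ c ∈ Finset.range (2 ^ d n), ∑ ω : Fin n → Fin (d n) → Bool,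
            bitWeight (μ n) ω *
            (if max 1 (Ecol n (d n) (μ n) c) * Real.logb 2 n < Vcount ω c then (1:ℝ) else 0) := by
          refine sub_le_sub_left (Finset.sum_le_sum fun c hc => ?_) 1
          exact tail_bound hn (hμ n) c _ (Ecol_eq n (μ n) (Finset.mem_range.1 hc))
      _ = ∑ ω : Fin n → Fin (d n) → Bool, bitWeight (μ n) ω *
            (1 - ∑ c ∈ Finset.range (2 ^ d n),
            (if max 1 (Ecol n (d n) (μ n) c) * Real.logb 2 n < Vcount ω c then (1:ℝ) else 0)) := by
          simp only [mul_sub, mul_one, Finset.sum_sub_distrib, sum_bitWeight, Finset.mul_sum]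
          rw [Finset.sum_comm]
      _ ≤ _ := Finset.sum_le_sum fun ω _ =>
          mul_le_mul_of_nonneg_left (hkey ω) (bitWeight_nonneg (hμ n) ω)
  · refine Filter.Eventually.of_forall fun n => ?_
    refine le_trans ?_ (sum_bitWeight n (d n) (μ n)).le
    refine Finset.sum_le_sum fun ω _ => ?_
    have := bitWeight_nonneg (hμ n) ω
    split_ifs <;> simp [this]
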